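/- Let R be an F_p-algebra and M an n×n matrix over R. Let R' be a strictly henselian local R-algebra with maximal ideal m and residue field κ. Then the map R'^n → R'^n, v ↦ v − M·φ(v) (where φ applies x ↦ x^p entrywise), restricts to a bijection m^n → m^n; consequently the induced map on kernels ker(1 − Mφ : R'^n → R'^n) → ker(1 − Mφ : κ^n → κ^n) is injective with image the reductions of solutions, and the map of fibers of 1 − Mφ over R' and over κ is an isomorphism. -/

import Mathlib

/-- The map `v ↦ v − M·φ(v)` on `A^n`, where `φ` is the entrywise `p`-th power. -/
def frobAffineMap (p n : ℕ) (A : Type*) [CommRing A] (M : Matrix (Fin n) (Fin n) A) :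
    (Fin n → A) → (Fin n → A) :=
  fun v => v - M.mulVec fun i => v i ^ p

/-- Étale algebras over a henselian local ring: residue field points lift to sections. -/
theorem aux_exists_section {A B : Type*} [CommRing A] [HenselianLocalRing A]
    [CommRing B] [Algebra A B] [Algebra.Etale A B]
    (g : B →ₐ[A] IsLocalRing.ResidueField A) :
    ∃ s : B →ₐ[A] A, ∀ b, IsLocalRing.residue A (s b) = g b := by
  have hprime : (RingHom.ker g).IsPrime := RingHom.ker_isPrime _
  have : Algebra.IsEtaleAt A (RingHom.ker g) := by
    have : Algebra.FormallyEtale B (Localization.AtPrime (RingHom.ker g)) :=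
      Algebra.FormallyEtale.of_isLocalization (RingHom.ker g).primeCompl
    exact Algebra.FormallyEtale.comp A B _
  obtain ⟨f, hf, hS⟩ := Algebra.IsEtaleAt.exists_isStandardEtale (R := A) (RingHom.ker g)
  obtain ⟨P⟩ := hS.nonempty_standardEtalePresentation
  have hu : IsUnit (g f) := by
    rw [isUnit_iff_ne_zero]
    exact fun h => hf h
  let g' : Localization.Away f →ₐ[A] IsLocalRing.ResidueField A :=
    IsLocalization.liftAlgHom (M := Submonoid.powers f) (f := g) (by
      rintro ⟨_, k, rfl⟩
      simpa using hu.pow k)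
  have hg' : ∀ b, g' (algebraMap B _ b) = g b := fun b => by
    simp [g']
  have hm := P.hasMap.map g'
  have hH : ∀ f : Polynomial A, f.Monic → ∀ a₀ : IsLocalRing.ResidueField A,
      Polynomial.aeval a₀ f = 0 → Polynomial.aeval a₀ (Polynomial.derivative f) ≠ 0 →
      ∃ a : A, f.IsRoot a ∧ IsLocalRing.residue A a = a₀ :=
    ((HenselianLocalRing.TFAE A).out 0 1 rfl rfl).mp inferInstance
  obtain ⟨a, ha, hra⟩ := hH P.f P.monic_f (g' P.x) hm.1
    hm.isUnit_derivative_f.ne_zero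
  have haP : P.HasMap a := by
    refine ⟨by simpa using ha, ?_⟩
    have h2 := hm.2
    rw [← hra] at h2
    have h3 : Polynomial.aeval (IsLocalRing.residue A a) P.g
        = IsLocalRing.residue A (Polynomial.aeval a P.g) := by
      have := Polynomial.aeval_algebraMap_apply (IsLocalRing.ResidueField A) a P.g
      simpa using this
    rw [h3] at h2
    exact isUnit_of_map_unit (IsLocalRing.residue A) _ h2
  let s' : Localization.Away f →ₐ[A] A := (P.lift a haP).comp P.equivRing.toAlgHom
  have hs' : ((IsScalarTower.toAlgHom A A (IsLocalRing.ResidueField A)).comp s') = g' := by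
    apply P.hom_ext
    simp [s', hra]
  refine ⟨s'.comp (IsScalarTower.toAlgHom A B _), fun b => ?_⟩
  rw [← hg', ← hs']
  simp

open MvPolynomial in
/-- The algebra of fibers is étale by the Jacobian criterion. -/
theorem aux_etale {A : Type*} [CommRing A] (p n : ℕ) [CharP A p]
    (M : Matrix (Fin n) (Fin n) A) (y : Fin n → A) :
    Algebra.Etale A (MvPolynomial (Fin n) A ⧸ (Ideal.span (Set.range
      (fun i : Fin n => (X i - ∑ j, C (M i j) * X j ^ p - C (y i) : MvPolynomial (Fin n) A))))) := by
  let P := Algebra.PreSubmersivePresentation.naive (R := A) (v :=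
      (fun i : Fin n => (X i - ∑ j, C (M i j) * X j ^ p - C (y i) : MvPolynomial (Fin n) A)))
      (id : Fin n → Fin n) Function.injective_id
  have hJ : P.jacobiMatrix = 1 := by
    ext1 i j
    rw [Algebra.PreSubmersivePresentation.jacobiMatrix_naive]
    simp [Derivation.leibniz_pow, Matrix.one_apply, Pi.single_apply, pderiv_X, eq_comm]
  let Q : Algebra.SubmersivePresentation A _ (Fin n) (Fin n) :=
    { P with
      jacobian_isUnit := by
        rw [Algebra.PreSubmersivePresentation.jacobian_eq_jacobiMatrix_det]
        erw [hJ]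
        simp }
  have := Q.isStandardSmoothOfRelativeDimension (n := 0)
    (by simp [Algebra.Presentation.dimension])
  infer_instance

theorem aux_unique {A : Type*} [CommRing A] [IsLocalRing A] (p n : ℕ) (hp : 2 ≤ p)
    (M : Matrix (Fin n) (Fin n) A) (d : Fin n → A)
    (hd : ∀ i, d i ∈ IsLocalRing.maximalIdeal A)
    (h : ∀ i, d i = ∑ j, M i j * d j ^ p) : d = 0 := by
  have hI : Ideal.span (Set.range d) = ⊥ := by
    apply Submodule.eq_bot_of_le_smul_of_le_jacobson_bot (IsLocalRing.maximalIdeal A)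
    · exact Submodule.fg_span (Set.finite_range d)
    · rw [Ideal.span_le]
      rintro _ ⟨i, rfl⟩
      rw [h i]
      refine Ideal.sum_mem _ fun j _ => Ideal.mul_mem_left _ _ ?_
      obtain ⟨k, rfl⟩ := Nat.exists_eq_add_of_le hp
      have : d j ^ (2 + k) = d j ^ k * (d j * d j) := by ring
      rw [this]
      exact Ideal.mul_mem_left _ _
        (Ideal.mul_mem_mul (hd j) (Ideal.subset_span ⟨j, rfl⟩))
    · rw [IsLocalRing.jacobson_eq_maximalIdeal _ bot_ne_top]
  funext i
  have : d i ∈ Ideal.span (Set.range d) := Ideal.subset_span ⟨i, rfl⟩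
  rw [hI] at this
  simpa using this

open MvPolynomial in
theorem aux_fiber {A : Type*} [CommRing A] [HenselianLocalRing A] (p n : ℕ) [Fact p.Prime]
    [CharP A p]
    (M : Matrix (Fin n) (Fin n) A) (y : Fin n → A) (w : Fin n → IsLocalRing.ResidueField A)
    (hw : frobAffineMap p n (IsLocalRing.ResidueField A) (M.map (IsLocalRing.residue A)) w =
        (fun i => IsLocalRing.residue A (y i))) :
    ∃! v : Fin n → A, frobAffineMap p n A M v = y ∧
        ∀ i, IsLocalRing.residue A (v i) = w i := by
  have happ : ∀ v i, frobAffineMap p n A M v i = v i - ∑ j, M i j * v j ^ p := fun v i => by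
    simp [frobAffineMap, Matrix.mulVec, dotProduct]
  have hwi : ∀ i, w i - ∑ j, IsLocalRing.residue A (M i j) * w j ^ p
      = IsLocalRing.residue A (y i) := fun i => by
    simpa [frobAffineMap, Matrix.mulVec, dotProduct] using congrFun hw i
  have het := aux_etale p n M y
  set r : Fin n → MvPolynomial (Fin n) A :=
    fun i => X i - ∑ j, C (M i j) * X j ^ p - C (y i) with hr
  let g : (MvPolynomial (Fin n) A ⧸ Ideal.span (Set.range r)) →ₐ[A] IsLocalRing.ResidueField A :=
    Ideal.Quotient.liftₐ _ (aeval w) (by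
      change Ideal.span (Set.range r) ≤ RingHom.ker (aeval w)
      rw [Ideal.span_le]
      rintro _ ⟨i, rfl⟩
      simp [hr, hwi])
  obtain ⟨s, hs⟩ := aux_exists_section g
  have hvA : frobAffineMap p n A M (fun i => s (Ideal.Quotient.mk _ (X i))) = y := by
    funext i
    have h0 : s (Ideal.Quotient.mkₐ A (Ideal.span (Set.range r)) (r i)) = 0 := by
      have hmem : r i ∈ Ideal.span (Set.range r) := Ideal.subset_span ⟨i, rfl⟩
      rw [Ideal.Quotient.mkₐ_eq_mk, Ideal.Quotient.eq_zero_iff_mem.mpr hmem, map_zero]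
    rw [happ, ← sub_eq_zero, ← h0]
    have hC : ∀ a : A, s (Ideal.Quotient.mk (Ideal.span (Set.range r)) (C a)) = a :=
      fun a => s.commutes a
    simp [hr, hC]
  have hvB : ∀ i, IsLocalRing.residue A (s (Ideal.Quotient.mk _ (X i))) = w i := by
    intro i
    rw [hs]
    change aeval w (X i) = w i
    simp
  refine ⟨fun i => s (Ideal.Quotient.mk _ (X i)), ⟨hvA, hvB⟩, ?_⟩
  · rintro v' ⟨h1, h2⟩
    set v : Fin n → A := fun i => s (Ideal.Quotient.mk _ (X i)) with hv
    have hvy : ∀ i, v i - ∑ j, M i j * v j ^ p = y i := by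
      intro i
      rw [← happ, hvA]
    have hvy' : ∀ i, v' i - ∑ j, M i j * v' j ^ p = y i := by
      intro i
      rw [← happ, h1]
    have hd : v' - v = 0 := by
      apply aux_unique p n (Fact.out : p.Prime).two_le M
      · intro i
        rw [← IsLocalRing.residue_eq_zero_iff, Pi.sub_apply, map_sub, h2, hvB, sub_self]
      · intro i
        simp only [Pi.sub_apply, sub_pow_char, mul_sub, Finset.sum_sub_distrib]
        linear_combination hvy' i - hvy i
    exact sub_eq_zero.mp hd

/-- Let `R` be an `F_p`-algebra and `M` an `n×n` matrix over `R`.  Let `R'`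
be a strictly henselian local `R`-algebra with maximal ideal `m` and residue field `κ`.
Then `v ↦ v − M·φ(v)` restricts to a bijection `m^n → m^n`; consequently the map of fibers
of `1 − Mφ` over `R'` and over `κ` is an isomorphism: for every `y ∈ R'^n` and every
solution `w` of `(1 − Mφ)(w) = ȳ` over `κ`, there is a unique `v ∈ R'^n` with
`(1 − Mφ)(v) = y` lifting `w`.  (Taking `y = 0` this gives the bijection of kernels.) -/
theorem stmt16 (p n : ℕ) [Fact p.Prime] (R : Type*) [CommRing R] [CharP R p]
    (R' : Type*) [CommRing R'] [Algebra R R'] [HenselianLocalRing R']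
    [IsSepClosed (IsLocalRing.ResidueField R')]
    (M : Matrix (Fin n) (Fin n) R) :
    Set.BijOn (frobAffineMap p n R' (M.map (algebraMap R R')))
      {v : Fin n → R' | ∀ i, v i ∈ IsLocalRing.maximalIdeal R'}
      {v : Fin n → R' | ∀ i, v i ∈ IsLocalRing.maximalIdeal R'} ∧
    (∀ (y : Fin n → R') (w : Fin n → IsLocalRing.ResidueField R'),
      frobAffineMap p n (IsLocalRing.ResidueField R')
          (M.map ((IsLocalRing.residue R').comp (algebraMap R R'))) w =
        (fun i => IsLocalRing.residue R' (y i)) →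
      ∃! v : Fin n → R', frobAffineMap p n R' (M.map (algebraMap R R')) v = y ∧
        ∀ i, IsLocalRing.residue R' (v i) = w i) := by
  have hchar : CharP R' p := by
    have f : ZMod p →+* R' := (algebraMap R R').comp (ZMod.castHom (dvd_refl p) R)
    exact charP_of_injective_ringHom f.injective p
  have key := fun y w hw => aux_fiber p n (M.map (algebraMap R R')) y w hw
  rw [Matrix.map_map, ← RingHom.coe_comp] at key
  have hp := (Fact.out : p.Prime).ne_zero
  have hmaps : Set.MapsTo (frobAffineMap p n R' (M.map (algebraMap R R')))
      {v : Fin n → R' | ∀ i, v i ∈ IsLocalRing.maximalIdeal R'}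
      {v : Fin n → R' | ∀ i, v i ∈ IsLocalRing.maximalIdeal R'} := by
    intro v hv i
    simp only [frobAffineMap, Matrix.mulVec, dotProduct, Pi.sub_apply]
    exact sub_mem (hv i) (Ideal.sum_mem _ fun j _ => Ideal.mul_mem_left _ _
      (Ideal.pow_mem_of_mem _ (hv j) _ (Nat.pos_of_ne_zero hp)))
  have hzero : ∀ y : Fin n → R', (∀ i, y i ∈ IsLocalRing.maximalIdeal R') →
      frobAffineMap p n (IsLocalRing.ResidueField R')
          (M.map ((IsLocalRing.residue R').comp (algebraMap R R'))) 0 =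
        (fun i => IsLocalRing.residue R' (y i)) := by
    intro y hy
    funext i
    rw [(IsLocalRing.residue_eq_zero_iff _).mpr (hy i)]
    simp [frobAffineMap, Matrix.mulVec, dotProduct, hp]
  refine ⟨⟨hmaps, ?_, ?_⟩, key⟩
  · intro v hv v' hv' hvv
    obtain ⟨_, -, hu⟩ := key (frobAffineMap p n R' (M.map (algebraMap R R')) v') 0 (hzero _ (hmaps hv'))
    rw [hu v ⟨hvv, fun i => (IsLocalRing.residue_eq_zero_iff _).mpr (hv i)⟩,
      hu v' ⟨rfl, fun i => (IsLocalRing.residue_eq_zero_iff _).mpr (hv' i)⟩]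
  · intro y hy
    obtain ⟨v, ⟨hv1, hv2⟩, -⟩ := key y 0 (hzero y hy)
    exact ⟨v, fun i => (IsLocalRing.residue_eq_zero_iff _).mp (hv2 i), hv1⟩
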